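/- Let n ≥ 7 with n ≡ 1 (mod 6). There exists a polytope P ⊆ [0,1]^n (the convex hull of finitely many points) such that P_I = L^2(P) and L^2(P) ⊊ B^{(n−1)/6}(P). -/

import Mathlib

open Set

def cube (n : ℕ) : Set (Fin n → ℝ) := {x | ∀ i, 0 ≤ x i ∧ x i ≤ 1}

def corners (n : ℕ) : Set (Fin n → ℝ) := {x | ∀ i, x i = 0 ∨ x i = 1}

def integerHull (n : ℕ) (P : Set (Fin n → ℝ)) : Set (Fin n → ℝ) :=
  convexHull ℝ (P ∩ corners n)

def Lop (n : ℕ) (P : Set (Fin n → ℝ)) : Set (Fin n → ℝ) :=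
  ⋂ i : Fin n, convexHull ℝ ((P ∩ {x | x i = 0}) ∪ (P ∩ {x | x i = 1}))

def Lk (n : ℕ) : ℕ → Set (Fin n → ℝ) → Set (Fin n → ℝ)
  | 0, P => P
  | k + 1, P => Lop n (Lk n k P)

/-- The Balas–Ceria–Cornuéjols operator `B^k`. -/
def Bk (n k : ℕ) (P : Set (Fin n → ℝ)) : Set (Fin n → ℝ) :=
  ⋂ S ∈ {S : Finset (Fin n) | S.card = k},
    convexHull ℝ {x ∈ P | ∀ j ∈ S, x j = 0 ∨ x j = 1}

/-!
Let `P` be the convex hull of the `2n` points `½eᵢ` and `𝟏 - ½eᵢ`. Inside the cube, the points with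
`xⱼ ∈ {0, 1}` form an extreme subset, so the `j`-th hull defining `L(P)` is spanned by the
generators with `xⱼ ∈ {0, 1}`, all of which lie on the hyperplane `∑ xᵢ = ½ + (n - 1)xⱼ`. These
`n` hyperplanes meet only in `½𝟏`; hence `L(P) ⊆ {½𝟏}`, so `L²(P)` is empty, and with it `P_I`.
On the other hand, if some `i` lies outside `S`, the generators `½eᵢ` and `𝟏 - ½eᵢ` are both
integral on `S`, and their midpoint is `½𝟏`; so `½𝟏` survives in `B^k(P)` for every `k < n`.
-/

section ConvexHull

variable {𝕜 E : Type*} [Semiring 𝕜] [PartialOrder 𝕜] [ZeroLEOneClass 𝕜]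
  [AddCommMonoid E] [Module 𝕜 E]

theorem convexHull_inter_subset_of_isExtreme {A B s : Set E} (hA : Convex 𝕜 A)
    (hB : IsExtreme 𝕜 A B) (hs : s ⊆ A) : convexHull 𝕜 s ∩ B ⊆ convexHull 𝕜 (s ∩ B) := by
  have hconv : Convex 𝕜 {x ∈ A | x ∈ B → x ∈ convexHull 𝕜 (s ∩ B)} := by
    rw [convex_iff_openSegment_subset]
    rintro x ⟨hxA, hx⟩ y ⟨hyA, hy⟩ z hz
    refine ⟨hA.openSegment_subset hxA hyA hz, fun hzB => ?_⟩
    exact (convex_convexHull 𝕜 (s ∩ B)).openSegment_subset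
      (hx (hB.left_mem_of_mem_openSegment hxA hyA hzB hz))
      (hy (hB.right_mem_of_mem_openSegment hxA hyA hzB hz)) hz
  have hsub : s ⊆ {x ∈ A | x ∈ B → x ∈ convexHull 𝕜 (s ∩ B)} :=
    fun v hv => ⟨hs hv, fun hvB => subset_convexHull 𝕜 _ ⟨hv, hvB⟩⟩
  exact fun x hx => (convexHull_min hsub hconv hx.1).2 hx.2

end ConvexHull

section LiftAndProject

variable {n : ℕ} {P V : Set (Fin n → ℝ)}

theorem convex_cube (n : ℕ) : Convex ℝ (cube n) := by
  have hcube : cube n = Icc 0 1 := by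
    ext x
    simp only [cube, mem_ofPred_eq, mem_Icc, Pi.le_def, Pi.zero_apply, Pi.one_apply, forall_and]
  exact hcube ▸ convex_Icc 0 1

theorem isExtreme_cube_setOf_integral (i : Fin n) :
    IsExtreme ℝ (cube n) {x ∈ cube n | x i = 0 ∨ x i = 1} := by
  refine ⟨sep_subset _ _, fun x hx y hy z hz hxyz => ⟨hx, ?_⟩⟩
  obtain ⟨a, b, ha, hb, hab, rfl⟩ := hxyz
  simp only [mem_ofPred_eq, Pi.add_apply, Pi.smul_apply, smul_eq_mul] at hz
  obtain ⟨hx0, hx1⟩ := hx i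
  obtain ⟨hy0, hy1⟩ := hy i
  rcases hz.2 with h | h
  · left
    nlinarith [mul_nonneg hb.le hy0]
  · right
    nlinarith [mul_le_of_le_one_right hb.le hy1]

theorem Lop_convexHull_subset (hV : V ⊆ cube n) (i : Fin n) :
    Lop n (convexHull ℝ V) ⊆ convexHull ℝ {v ∈ V | v i = 0 ∨ v i = 1} := by
  refine (iInter_subset _ i).trans (convexHull_min ?_ (convex_convexHull ℝ _))
  rw [← inter_union_distrib_left]
  rintro x ⟨hx, hxi⟩
  have hx_cube : x ∈ cube n := convexHull_min hV (convex_cube n) hx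
  have hx_hull := convexHull_inter_subset_of_isExtreme (convex_cube n)
    (isExtreme_cube_setOf_integral i) hV ⟨hx, hx_cube, hxi⟩
  exact convexHull_mono (inter_subset_inter_right V fun v hv => hv.2) hx_hull

theorem Lop_eq_empty (i : Fin n) (hP : ∀ x ∈ P, x i ≠ 0 ∧ x i ≠ 1) : Lop n P = ∅ := by
  have hfaces : P ∩ {x | x i = 0} ∪ P ∩ {x | x i = 1} = ∅ := by
    rw [← inter_union_distrib_left, eq_empty_iff_forall_notMem]
    rintro x ⟨hx, h0 | h1⟩
    · exact (hP x hx).1 h0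
    · exact (hP x hx).2 h1
  refine subset_empty_iff.1 ((iInter_subset _ i).trans ?_)
  rw [hfaces, convexHull_empty]

theorem inter_corners_subset_Lk (k : ℕ) : P ∩ corners n ⊆ Lk n k P := by
  induction k with
  | zero => exact inter_subset_left
  | succ k ih =>
    intro x hx
    refine mem_iInter.2 fun i => subset_convexHull ℝ _ ?_
    exact (hx.2 i).imp (fun h0 => ⟨ih hx, h0⟩) (fun h1 => ⟨ih hx, h1⟩)

theorem integerHull_eq_empty_of_Lk_eq_empty {k : ℕ} (h : Lk n k P = ∅) : integerHull n P = ∅ := by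
  rw [integerHull, convexHull_eq_empty, ← subset_empty_iff, ← h]
  exact inter_corners_subset_Lk k

end LiftAndProject

/-- The points `½eᵢ` and their reflections `𝟏 - ½eᵢ` through the centre of the cube, whose convex
hull is the polytope separating `L²` from `B^k`. -/
def halfPoints (n : ℕ) : Set (Fin n → ℝ) :=
  range (fun i => Pi.single i (1 / 2)) ∪ range (fun i => 1 - Pi.single i (1 / 2))

section HalfPoints

variable {n : ℕ}

theorem finite_halfPoints (n : ℕ) : (halfPoints n).Finite :=
  (finite_range _).union (finite_range _)

theorem halfPoints_subset_cube (n : ℕ) : halfPoints n ⊆ cube n := by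
  rintro _ (⟨i, rfl⟩ | ⟨i, rfl⟩) j <;> obtain rfl | hij := eq_or_ne j i <;> norm_num [*]

theorem sum_eq_of_mem_halfPoints {v : Fin n → ℝ} (hv : v ∈ halfPoints n) {j : Fin n}
    (hj : v j = 0 ∨ v j = 1) : ∑ i, v i = 1 / 2 + (n - 1) * v j := by
  obtain ⟨i, rfl⟩ | ⟨i, rfl⟩ := hv <;> obtain rfl | hij := eq_or_ne j i
  · norm_num at hj
  · simp [hij]
  · norm_num at hj
  · have hsum : ∑ k, (1 - Pi.single i (1 / 2) : Fin n → ℝ) k = n - 1 / 2 := by simp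
    have hvj : (1 - Pi.single i (1 / 2) : Fin n → ℝ) j = 1 := by simp [hij]
    linear_combination hsum - (n - 1) * hvj

theorem sum_eq_of_mem_Lop_halfPoints {x : Fin n → ℝ}
    (hx : x ∈ Lop n (convexHull ℝ (halfPoints n))) (j : Fin n) :
    ∑ i, x i = 1 / 2 + (n - 1) * x j := by
  let f : (Fin n → ℝ) →ₗ[ℝ] ℝ := ∑ i, LinearMap.proj i - ((n : ℝ) - 1) • LinearMap.proj j
  have hf (y : Fin n → ℝ) : f y = ∑ i, y i - (n - 1) * y j := by simp [f]
  have hplane : {v ∈ halfPoints n | v j = 0 ∨ v j = 1} ⊆ {y | f y = 1 / 2} := by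
    rintro v ⟨hv, hvj⟩
    rw [mem_ofPred_eq, hf, sum_eq_of_mem_halfPoints hv hvj, add_sub_cancel_right]
  have hfx : f x = 1 / 2 := convexHull_min hplane (convex_hyperplane f.isLinear _)
    (Lop_convexHull_subset (halfPoints_subset_cube n) j hx)
  rw [hf] at hfx
  linarith

theorem eq_half_of_forall_sum_eq {x : Fin n → ℝ}
    (hx : ∀ j, ∑ i, x i = 1 / 2 + (n - 1) * x j) (j : Fin n) : x j = 1 / 2 := by
  have hconst (i : Fin n) : x i = x j := by
    obtain rfl | hij := eq_or_ne i j
    · rfl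
    have hn : n ≠ 1 := by
      rintro rfl
      exact hij (Subsingleton.elim i j)
    exact mul_left_cancel₀ (sub_ne_zero.2 (Nat.cast_ne_one.2 hn)) (by linarith [hx i, hx j])
  have hsum : ∑ i, x i = n * x j := by simp [hconst]
  linarith [hx j]

theorem Lk_two_halfPoints (hn : n ≠ 0) : Lk n 2 (convexHull ℝ (halfPoints n)) = ∅ := by
  refine Lop_eq_empty ⟨0, Nat.pos_of_ne_zero hn⟩ fun x hx => ?_
  rw [eq_half_of_forall_sum_eq (sum_eq_of_mem_Lop_halfPoints hx)]
  norm_num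

theorem half_mem_Bk_halfPoints {k : ℕ} (hk : k < n) :
    (fun _ => 1 / 2) ∈ Bk n k (convexHull ℝ (halfPoints n)) := by
  refine mem_iInter₂.2 fun S (hS : S.card = k) => ?_
  obtain ⟨i, hi⟩ : ∃ i, i ∉ S := by
    by_contra! h
    rw [Finset.eq_univ_iff_forall.2 h, Finset.card_univ, Fintype.card_fin] at hS
    omega
  have hne {j : Fin n} (hj : j ∈ S) : j ≠ i := ne_of_mem_of_not_mem hj hi
  set T := {x ∈ convexHull ℝ (halfPoints n) | ∀ j ∈ S, x j = 0 ∨ x j = 1}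
  have hsingle : Pi.single i (1 / 2) ∈ T :=
    ⟨subset_convexHull ℝ _ (Or.inl ⟨i, rfl⟩), fun j hj => Or.inl (by simp [hne hj])⟩
  have hreflect : 1 - Pi.single i (1 / 2) ∈ T :=
    ⟨subset_convexHull ℝ _ (Or.inr ⟨i, rfl⟩), fun j hj => Or.inr (by simp [hne hj])⟩
  have hmid : midpoint ℝ (Pi.single i (1 / 2) : Fin n → ℝ) (1 - Pi.single i (1 / 2)) =
      fun _ => 1 / 2 := by
    rw [midpoint_eq_smul_add, add_sub_cancel]
    ext j
    norm_num
  rw [← hmid]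
  exact (convex_convexHull ℝ T).midpoint_mem (subset_convexHull ℝ T hsingle)
    (subset_convexHull ℝ T hreflect)

end HalfPoints

theorem stmt18_general (n k : ℕ) (hk : k < n) :
    ∃ (V : Set (Fin n → ℝ)) (P : Set (Fin n → ℝ)), V.Finite ∧ P = convexHull ℝ V ∧
      P ⊆ cube n ∧
      integerHull n P = Lk n 2 P ∧
      Lk n 2 P ⊂ Bk n k P := by
  have hL : Lk n 2 (convexHull ℝ (halfPoints n)) = ∅ := Lk_two_halfPoints (by omega)
  refine ⟨halfPoints n, convexHull ℝ (halfPoints n), finite_halfPoints n, rfl,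
    convexHull_min (halfPoints_subset_cube n) (convex_cube n), ?_, ?_⟩
  · rw [hL, integerHull_eq_empty_of_Lk_eq_empty hL]
  · rw [hL, empty_ssubset]
    exact ⟨_, half_mem_Bk_halfPoints hk⟩

theorem stmt18 (n : ℕ) (hn : 7 ≤ n) (hmod : n % 6 = 1) :
    ∃ (V : Set (Fin n → ℝ)) (P : Set (Fin n → ℝ)), V.Finite ∧ P = convexHull ℝ V ∧
      P ⊆ cube n ∧
      integerHull n P = Lk n 2 P ∧
      Lk n 2 P ⊂ Bk n ((n - 1) / 6) P :=
  stmt18_general n ((n - 1) / 6) (by omega)
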